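/- Let r, d, s, π, π' be integers with r ≥ 4, r−1 ≤ s ≤ 2r−4, 0 ≤ π' < π ≤ π₀ := s−r+1, and d > d₀(r). Then h_{r,d,s,π'} > h_{r,d,s,π}, i.e. h_{r,d,s,π'}(i) ≥ h_{r,d,s,π}(i) for every i ≥ 1 with strict inequality for some i; consequently G*(r,d,s,π', −binom(π₀−π'+1, 2)) < G*(r,d,s,π, −binom(π₀−π+1, 2)). -/

import Mathlib

/-!
Write `m = (d - 1) / s` and `π₀ = s - r + 1`. Since `π + max 0 (c - π) = max π c`, the function
`hF r d s π` takes the value `1 + i * s - max π (π₀ + 1 - i)` at `1 ≤ i ≤ m`, which is visibly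
antitone in `π`, and strictly so at `i = m` as soon as `π₀ - π' < m`.

For `Gstar`, passing from `π'` to `π` gains `m * (π - π')`, while the binomial term drops by the sum
of the `π - π'` integers in `(π₀ - π, π₀ - π']`, hence by at most `(π - π') * (π₀ - π')`. So again
`π₀ - π' < m` suffices. The threshold `d0 r` enters only through `π₀ < r - 2 ≤ m`.
-/

open scoped BigOperators

noncomputable section

/-- The homogeneous coordinate ring of `ℙ^{n-1}` over `ℂ`: polynomials in `n` variables. -/
abbrev MPoly (n : ℕ) : Type := MvPolynomial (Fin n) ℂ

/-- An ideal is homogeneous if it contains all homogeneous components of its members. -/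
def IsHomogIdeal {n : ℕ} (I : Ideal (MPoly n)) : Prop :=
  ∀ f ∈ I, ∀ k : ℕ, MvPolynomial.homogeneousComponent k f ∈ I

/-- The degree-`k` graded piece of the homogeneous coordinate ring of the subscheme `V(I)`. -/
def degQ {n : ℕ} (I : Ideal (MPoly n)) (k : ℕ) : Submodule ℂ (MPoly n ⧸ I) :=
  (MvPolynomial.homogeneousSubmodule (Fin n) ℂ k).map (Ideal.Quotient.mkₐ ℂ I).toLinearMap

/-- The graded pieces, indexed by `ℤ` (zero in negative degrees). -/
def degQZ {n : ℕ} (I : Ideal (MPoly n)) (t : ℤ) : Submodule ℂ (MPoly n ⧸ I) :=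
  if 0 ≤ t then degQ I t.toNat else ⊥

/-- The Hilbert function of the closed subscheme `V(I) ⊆ ℙ^{n-1}`. -/
def hilbNat {n : ℕ} (I : Ideal (MPoly n)) (t : ℤ) : ℕ :=
  Module.finrank ℂ (degQZ I t)

/-- The Hilbert function, as an integer-valued function. -/
def hilbZ {n : ℕ} (I : Ideal (MPoly n)) (t : ℤ) : ℤ := (hilbNat I t : ℤ)

/-- The irrelevant maximal ideal `(x_0, …, x_{n-1})`. -/
def mId (n : ℕ) : Ideal (MPoly n) := Ideal.span (Set.range MvPolynomial.X)

/-- The space of degree-`t` graded module homomorphisms `m^k → R/I`. -/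
def gradedHomSub {n : ℕ} (I : Ideal (MPoly n)) (k : ℕ) (t : ℤ) :
    Submodule ℂ ((mId n ^ k : Ideal (MPoly n)) →ₗ[MPoly n] (MPoly n ⧸ I)) where
  carrier := {φ | ∀ (j : ℕ) (f : MPoly n) (hf : f ∈ mId n ^ k),
    f ∈ MvPolynomial.homogeneousSubmodule (Fin n) ℂ j → φ ⟨f, hf⟩ ∈ degQZ I ((j : ℤ) + t)}
  add_mem' := by
    intro a b ha hb j f hf hj
    simpa using Submodule.add_mem _ (ha j f hf hj) (hb j f hf hj)
  zero_mem' := by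
    intro j f hf hj
    simpa using Submodule.zero_mem _
  smul_mem' := by
    intro c φ hφ j f hf hj
    simpa using Submodule.smul_mem _ c (hφ j f hf hj)

/-- `h⁰(X, 𝒪_X(t))` for `X = V(I)`: the stable value of the dimensions of the graded Hom
modules `Hom(m^k, R/I)_t` (the Deligne formula for twisted global sections). -/
def h0Nat {n : ℕ} (I : Ideal (MPoly n)) (t : ℤ) : ℕ :=
  ⨆ k : ℕ, Module.finrank ℂ (gradedHomSub I k t)

/-- `h¹(ℙ^{n-1}, 𝓘_X(t)) = h⁰(X, 𝒪_X(t)) − h_X(t)` (valid for the saturated ideal of `X`). -/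
def h1INat {n : ℕ} (I : Ideal (MPoly n)) (t : ℤ) : ℕ := h0Nat I t - hilbNat I t

/-- The dimension over `ℂ` of the Hartshorne–Rao module `M(X) = ⊕_t H¹(ℙ, 𝓘_X(t))`. -/
def raoDim {n : ℕ} (I : Ideal (MPoly n)) : ℕ := ∑ᶠ t : ℤ, h1INat I t

/-- Arithmetically Cohen–Macaulay (for an integral curve): the Hartshorne–Rao module vanishes. -/
def IsACM {n : ℕ} (I : Ideal (MPoly n)) : Prop := ∀ t : ℤ, h0Nat I t = hilbNat I t

/-- Saturation of an ideal with respect to the irrelevant maximal ideal. -/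
def satIdeal {n : ℕ} (I : Ideal (MPoly n)) : Ideal (MPoly n) where
  carrier := {f | ∃ k : ℕ, ∀ j : Fin n, MvPolynomial.X j ^ k * f ∈ I}
  zero_mem' := ⟨0, fun j => by simpa using I.zero_mem⟩
  add_mem' := by
    rintro f g ⟨k, hk⟩ ⟨l, hl⟩
    refine ⟨k + l, fun j => ?_⟩
    have h1 : MvPolynomial.X (R := ℂ) j ^ (k + l) * (f + g)
        = MvPolynomial.X j ^ l * (MvPolynomial.X j ^ k * f)
          + MvPolynomial.X j ^ k * (MvPolynomial.X j ^ l * g) := by ring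
    rw [h1]
    exact I.add_mem (I.mul_mem_left _ (hk j)) (I.mul_mem_left _ (hl j))
  smul_mem' := by
    rintro c f ⟨k, hk⟩
    refine ⟨k, fun j => ?_⟩
    have h1 : MvPolynomial.X (R := ℂ) j ^ k * (c • f) = c * (MvPolynomial.X j ^ k * f) := by
      rw [smul_eq_mul]; ring
    rw [h1]
    exact I.mul_mem_left _ (hk j)

/-- The hyperplane section of `V(I)` by the hyperplane `{ℓ = 0}`, as a closed subscheme
(its saturated homogeneous ideal). -/
def sect {n : ℕ} (I : Ideal (MPoly n)) (ℓ : MPoly n) : Ideal (MPoly n) :=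
  satIdeal (I ⊔ Ideal.span {ℓ})

/-- A property `P` holds for a *general* `k`-tuple of linear forms (hyperplanes): it holds on a
nonempty Zariski-open subset of the space of coefficients. -/
def GenericForms (n k : ℕ) (P : (Fin k → MPoly n) → Prop) : Prop :=
  ∃ Q : MvPolynomial (Fin k × Fin n) ℂ, Q ≠ 0 ∧
    ∀ c : Fin k → Fin n → ℂ, MvPolynomial.eval (fun p => c p.1 p.2) Q ≠ 0 →
      P fun t => ∑ j : Fin n, MvPolynomial.C (c t j) * MvPolynomial.X j

/-- `V(I) ⊆ ℙ^{n-1}` is nondegenerate: contained in no hyperplane. -/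
def Nondeg {n : ℕ} (I : Ideal (MPoly n)) : Prop :=
  ∀ f ∈ MvPolynomial.homogeneousSubmodule (Fin n) ℂ 1, f ∈ I → f = 0

/-- `V(I)` is an integral curve: `I` homogeneous prime, with cone of Krull dimension 2. -/
def IsCurve {n : ℕ} (I : Ideal (MPoly n)) : Prop :=
  IsHomogIdeal I ∧ I.IsPrime ∧ ringKrullDim (MPoly n ⧸ I) = 2

/-- `V(I)` is an integral surface: `I` homogeneous prime, with cone of Krull dimension 3. -/
def IsSurface {n : ℕ} (I : Ideal (MPoly n)) : Prop :=
  IsHomogIdeal I ∧ I.IsPrime ∧ ringKrullDim (MPoly n ⧸ I) = 3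

/-- The curve `V(I)` has degree `d` and arithmetic genus `g`: its Hilbert polynomial is
`d·t + 1 − g`. -/
def CurveInv {n : ℕ} (I : Ideal (MPoly n)) (d g : ℤ) : Prop :=
  ∃ N : ℤ, ∀ t : ℤ, N ≤ t → hilbZ I t = d * t + 1 - g

/-- The surface `V(I)` has degree `s`, sectional genus `π` and arithmetic genus `pa`:
its Hilbert polynomial is `s·choose(t+1, 2) + (1 − π)·t + 1 + pa`. -/
def SurfInv {n : ℕ} (I : Ideal (MPoly n)) (s π pa : ℤ) : Prop :=
  ∃ N : ℤ, ∀ t : ℤ, N ≤ t → hilbZ I t = s * (t * (t + 1) / 2) + (1 - π) * t + 1 + pa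

/-- `V(IC)` is not contained in any integral surface of degree `< s`. -/
def NotInSurfDegLT {n : ℕ} (IC : Ideal (MPoly n)) (s : ℤ) : Prop :=
  ∀ (T : Ideal (MPoly n)) (s' π' pa' : ℤ), IsSurface T → SurfInv T s' π' pa' → s' < s →
    ¬ T ≤ IC

/-- `V(IC)` is not contained in any integral surface of degree `s` with sectional genus `> π`. -/
def NotInSurfSecGT {n : ℕ} (IC : Ideal (MPoly n)) (s π : ℤ) : Prop :=
  ∀ (T : Ideal (MPoly n)) (π' pa' : ℤ), IsSurface T → SurfInv T s π' pa' → π < π' →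
    ¬ T ≤ IC

/-- `V(IC)` is not contained in any integral surface of degree `s` with arithmetic genus `< p`. -/
def NotInSurfGenLT {n : ℕ} (IC : Ideal (MPoly n)) (s p : ℤ) : Prop :=
  ∀ (T : Ideal (MPoly n)) (π' pa' : ℤ), IsSurface T → SurfInv T s π' pa' → pa' < p →
    ¬ T ≤ IC

/-- `binom2 z = z.choose 2` for integers. -/
def binom2 (z : ℤ) : ℤ := z * (z - 1) / 2

/-- The bound `G*(r,d,s,π,p)` of Di Gennaro–Franco, with `m = (d-1)/s`, `ε = (d-1) % s`. -/
def Gstar (r d s π p : ℤ) : ℤ :=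
  binom2 ((d - 1) / s) * s + ((d - 1) / s) * ((d - 1) % s + π) - p
    + max 0 ((2 * π - (s - 1 - (d - 1) % s)) / 2)

/-- The numerical function `h_{r,d,s,π}`. -/
def hF (r d s π : ℤ) (i : ℤ) : ℤ :=
  if 1 ≤ i ∧ i ≤ (d - 1) / s then
    1 - π + i * s - max 0 ((s - r + 1) - π - i + 1)
  else if i = (d - 1) / s + 1 then
    d - max 0 ((2 * π - (s - 1 - (d - 1) % s)) / 2)
  else if (d - 1) / s + 2 ≤ i then d
  else 0

/-- The threshold `d₀(r)`. -/
def d0 (r : ℤ) : ℤ :=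
  if r ≤ 6 then 16 * (r - 2) * (2 * r - 3)
  else if r ≤ 11 then 8 * (r - 2) ^ 3
  else 2 ^ (r.toNat + 1)

end
noncomputable section

/-- The affine cone of `V(I)`: common zeroes of the elements of `I`. -/
def zeroCone {n : ℕ} (I : Ideal (MPoly n)) : Set (Fin n → ℂ) :=
  {a | ∀ f ∈ I, MvPolynomial.eval a f = 0}

/-- Jacobian-criterion smoothness: at every nonzero point of the affine cone (of dimension `c`)
the gradients of the equations span a subspace of dimension `n - c`. -/
def IsSmooth {n : ℕ} (I : Ideal (MPoly n)) (c : ℕ) : Prop :=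
  ∀ a ∈ zeroCone I, a ≠ 0 →
    Module.finrank ℂ (Submodule.span ℂ
      {g : Fin n → ℂ | ∃ f ∈ I, g = fun j => MvPolynomial.eval a (MvPolynomial.pderiv j f)})
      = n - c

/-- Castelnuovo's bound for the genus of a nondegenerate integral curve of degree `d`
in `ℙ^R`. -/
def castelG (R d : ℤ) : ℤ :=
  binom2 ((d - 1) / (R - 1)) * (R - 1) + ((d - 1) / (R - 1)) * ((d - 1) % (R - 1))

/-- The ideal of the projective cone (from `ℙ^{n-1}` to `ℙ^n`) over `V(I)`. -/
def coneIdeal {n : ℕ} (I : Ideal (MPoly n)) : Ideal (MPoly (n + 1)) :=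
  Ideal.map (MvPolynomial.rename (Fin.castSucc : Fin n → Fin (n + 1))) I

/-- `J` is the (saturated homogeneous) ideal of a line in `ℙ^{n-1}`: it is generated by
`n - 2` linearly independent linear forms. -/
def IsLineIdeal {n : ℕ} (J : Ideal (MPoly n)) : Prop :=
  ∃ V : Submodule ℂ (MPoly n), V ≤ MvPolynomial.homogeneousSubmodule (Fin n) ℂ 1 ∧
    Module.finrank ℂ V = n - 2 ∧ J = Ideal.span (V : Set (MPoly n))

/-- `V(T) ⊆ ℙ^{n-1}` is a smooth rational normal scroll surface: a smooth nondegenerate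
integral surface of minimal degree `n - 2` (with sectional and arithmetic genus `0`)
containing a line (which rules out the Veronese surface). -/
def IsSmoothRNScroll {n : ℕ} (T : Ideal (MPoly n)) : Prop :=
  IsSurface T ∧ Nondeg T ∧ IsSmooth T 3 ∧ SurfInv T ((n : ℤ) - 2) 0 0 ∧
    ∃ J : Ideal (MPoly n), IsLineIdeal J ∧ T ≤ J

/-- The linear projection on points determined by the matrix `L`. -/
def projPt {nb ns : ℕ} (L : Fin ns → Fin nb → ℂ) (a : Fin nb → ℂ) : Fin ns → ℂ :=
  fun t => ∑ j, L t j * a j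

/-- The substitution algebra homomorphism determined by the matrix `L` (pullback of the
linear projection `ℙ^{nb-1} ⇢ ℙ^{ns-1}`). -/
def substHom {nb ns : ℕ} (L : Fin ns → Fin nb → ℂ) : MPoly ns →ₐ[ℂ] MPoly nb :=
  MvPolynomial.aeval fun t => ∑ j, MvPolynomial.C (L t j) * MvPolynomial.X j

/-- The linear projection given by `L` maps `V(I')` isomorphically onto `V(I)`: the center of
projection misses `V(I')`, `V(I)` is the image, and the projection is (projectively) bijective
from `V(I')` onto `V(I)`. -/
def IsIsoProjection {nb ns : ℕ} (L : Fin ns → Fin nb → ℂ)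
    (I' : Ideal (MPoly nb)) (I : Ideal (MPoly ns)) : Prop :=
  I = I'.comap (substHom L) ∧
  (∀ a ∈ zeroCone I', a ≠ 0 → projPt L a ≠ 0) ∧
  (∀ a ∈ zeroCone I', ∀ b ∈ zeroCone I', a ≠ 0 → b ≠ 0 →
    (∃ c : ℂ, c ≠ 0 ∧ projPt L a = c • projPt L b) → ∃ c : ℂ, c ≠ 0 ∧ a = c • b) ∧
  (∀ y ∈ zeroCone I, y ≠ 0 → ∃ a ∈ zeroCone I', a ≠ 0 ∧ ∃ c : ℂ, c ≠ 0 ∧ y = c • projPt L a)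

/-- `t` bounds the Castelnuovo–Mumford regularity of the surface `V(I) ⊆ ℙ^{n-1}`:
for every `t' ≥ t`, `H^i(ℙ, 𝓘(t'-i)) = 0` for all `i ≥ 1`, expressed through the standard
inductive characterization by successive general hyperplane sections. -/
def IsRegBound {n : ℕ} (I : Ideal (MPoly n)) (t : ℤ) : Prop :=
  GenericForms n 2 fun L => ∀ t' : ℤ, t ≤ t' →
    h1INat I (t' - 1) = 0 ∧ h1INat (sect I (L 0)) (t' - 1) = 0 ∧
      h1INat (sect (sect I (L 0)) (L 1)) (t' - 1) = 0

end

lemma two_mul_binom2 (z : ℤ) : 2 * binom2 z = z * (z - 1) :=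
  Int.mul_ediv_cancel' (Int.even_mul_pred_self z).two_dvd

lemma binom2_sub_binom2_le (a b : ℤ) : binom2 b - binom2 a ≤ (b - a) * (b - 1) := by
  have ha := two_mul_binom2 a
  have hb := two_mul_binom2 b
  have hsq : b - a ≤ (b - a) ^ 2 := Int.le_self_sq (b - a)
  linarith

lemma monotone_max_zero_ediv_two (c : ℤ) : Monotone fun π : ℤ ↦ max 0 ((2 * π - c) / 2) :=
  fun π' π (h : π' ≤ π) ↦ max_le_max_left 0 (Int.ediv_le_ediv two_pos (by linarith))

lemma add_one_mul_self_le_two_pow (n : ℕ) : (n + 1) * n ≤ 2 ^ (n + 2) := by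
  have hchoose : (n + 1).choose 2 * 2 = (n + 1) * n := by
    rw [Nat.choose_two_right, Nat.add_sub_cancel,
      Nat.div_mul_cancel (mul_comm n (n + 1) ▸ (Nat.even_mul_succ_self n).two_dvd)]
  calc (n + 1) * n = (n + 1).choose 2 * 2 := hchoose.symm
    _ ≤ 2 ^ (n + 1) * 2 := Nat.mul_le_mul_right 2 (Nat.choose_le_two_pow (n + 1) 2)
    _ = 2 ^ (n + 2) := (pow_succ 2 (n + 1)).symm

section Threshold

variable {r d s : ℤ}

lemma two_mul_sub_two_sq_le_d0 (hr : 2 ≤ r) : 2 * (r - 2) ^ 2 ≤ d0 r := by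
  obtain ⟨n, rfl⟩ : ∃ n : ℕ, r = n + 2 := ⟨(r - 2).toNat, by omega⟩
  simp only [d0, add_sub_cancel_right]
  split_ifs with h6 h11
  · nlinarith
  · have hn : (1 : ℤ) ≤ n := by omega
    calc (2 : ℤ) * (n : ℤ) ^ 2 ≤ 8 * (n : ℤ) ^ 2 := by gcongr; norm_num
      _ ≤ 8 * (n : ℤ) ^ 3 := by gcongr; norm_num
  · have hpow : ((n : ℤ) + 1) * n ≤ 2 ^ (n + 2) := mod_cast add_one_mul_self_le_two_pow n
    rw [show ((n : ℤ) + 2).toNat + 1 = (n + 2) + 1 by omega, pow_succ 2 (n + 2)]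
    linarith

lemma sub_two_le_ediv_of_d0_lt (hs : 0 < s) (hsr : s ≤ 2 * r - 4) (hd : d0 r < d) :
    r - 2 ≤ (d - 1) / s := by
  refine (Int.le_ediv_iff_mul_le hs).2 ?_
  calc (r - 2) * s ≤ (r - 2) * (2 * r - 4) := mul_le_mul_of_nonneg_left hsr (by omega)
    _ = 2 * (r - 2) ^ 2 := by ring
    _ ≤ d0 r := two_mul_sub_two_sq_le_d0 (by omega)
    _ ≤ d - 1 := Int.le_sub_one_of_lt hd

end Threshold

section Comparison

variable {r d s π π' : ℤ}

lemma hF_eq_sub_max {i : ℤ} (hi : 1 ≤ i ∧ i ≤ (d - 1) / s) :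
    hF r d s π i = 1 + i * s - max π (s - r + 2 - i) := by
  rw [hF, if_pos hi]
  omega

lemma antitone_hF (r d s : ℤ) : Antitone (hF r d s) := by
  intro π' π hπ i
  by_cases hi : 1 ≤ i ∧ i ≤ (d - 1) / s
  · rw [hF_eq_sub_max hi, hF_eq_sub_max hi]
    exact sub_le_sub_left (max_le_max_right _ hπ) _
  · simp only [hF, if_neg hi]
    split_ifs
    · exact sub_le_sub_left (monotone_max_zero_ediv_two _ hπ) d
    all_goals exact le_rfl

lemma hF_lt_hF {i : ℤ} (hπ : π' < π) (hi : 1 ≤ i ∧ i ≤ (d - 1) / s) (hiπ : s - r + 2 - i < π) :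
    hF r d s π i < hF r d s π' i := by
  rw [hF_eq_sub_max hi, hF_eq_sub_max hi]
  exact sub_lt_sub_left ((max_lt hπ hiπ).trans_le (le_max_left _ _)) _

lemma ediv_mul_sub_le_Gstar_sub_Gstar (hπ : π' ≤ π) (p p' : ℤ) :
    (d - 1) / s * (π - π') - (p - p') ≤ Gstar r d s π p - Gstar r d s π' p' := by
  have hcorr := monotone_max_zero_ediv_two (s - 1 - (d - 1) % s) hπ
  simp only [Gstar] at hcorr ⊢
  linarith

lemma Gstar_neg_binom2_lt (hπ : π' < π) (hm : s - r + 1 - π' < (d - 1) / s) :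
    Gstar r d s π' (-binom2 (s - r + 1 - π' + 1)) <
      Gstar r d s π (-binom2 (s - r + 1 - π + 1)) := by
  have hgain := ediv_mul_sub_le_Gstar_sub_Gstar (r := r) (d := d) (s := s) hπ.le
    (-binom2 (s - r + 1 - π + 1)) (-binom2 (s - r + 1 - π' + 1))
  have hdrop := binom2_sub_binom2_le (s - r + 1 - π + 1) (s - r + 1 - π' + 1)
  have hslack : (s - r + 1 - π') * (π - π') < (d - 1) / s * (π - π') :=
    mul_lt_mul_of_pos_right hm (sub_pos.2 hπ)
  linarith

end Comparison

theorem statement_9_general (r d s π π' : ℤ) (hπ : π' < π) (hm_pos : 0 < (d - 1) / s)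
    (hm : s - r + 1 - π' < (d - 1) / s) :
    (∀ i : ℤ, hF r d s π i ≤ hF r d s π' i) ∧
    (∃ i : ℤ, 1 ≤ i ∧ hF r d s π i < hF r d s π' i) ∧
    Gstar r d s π' (-(binom2 (s - r + 1 - π' + 1)))
      < Gstar r d s π (-(binom2 (s - r + 1 - π + 1))) :=
  ⟨antitone_hF r d s hπ.le,
    ⟨(d - 1) / s, hm_pos, hF_lt_hF hπ ⟨hm_pos, le_rfl⟩ (by omega)⟩,
    Gstar_neg_binom2_lt hπ hm⟩

/-- Lemma 3.2(2).  If `π' < π` then `h_{r,d,s,π'} > h_{r,d,s,π}`, and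
consequently `G*(r,d,s,π',-binom(π₀-π'+1,2)) < G*(r,d,s,π,-binom(π₀-π+1,2))`. -/
theorem statement_9 (r d s π π' : ℤ) (hr : 4 ≤ r)
    (hs1 : r - 1 ≤ s) (hs2 : s ≤ 2 * r - 4)
    (hπ'1 : 0 ≤ π') (hπ'2 : π' < π) (hπ2 : π ≤ s - r + 1)
    (hd : d0 r < d) :
    (∀ i : ℤ, 1 ≤ i → hF r d s π i ≤ hF r d s π' i) ∧
    (∃ i : ℤ, 1 ≤ i ∧ hF r d s π i < hF r d s π' i) ∧
    Gstar r d s π' (-(binom2 (s - r + 1 - π' + 1)))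
      < Gstar r d s π (-(binom2 (s - r + 1 - π + 1))) := by
  have hm : r - 2 ≤ (d - 1) / s := sub_two_le_ediv_of_d0_lt (by omega) hs2 hd
  exact (statement_9_general r d s π π' hπ'2 (by omega) (by omega)).imp_left fun h i _ ↦ h i
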